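/- arXiv:1012.5492 — 3 statements merged into one kernel-verified Lean document; each statement's English description precedes it below -/
import Mathlib

section
/- Let x : Fin n → EReal have no entry equal to +∞. Then: (a) the part of x is [[x]] = {y : Fin n → EReal | (∀ i, y i ≠ +∞) ∧ Supp y = Supp x}; (b) writing ⊥ for the vector with all entries −∞, d(x, ⊥) = +∞ if x ≠ ⊥, and d(x, ⊥) = −∞ if x = ⊥. -/
/-!
Away from `⊤`, every entry is either `⊥` or real, and translating by a real number preserves
each of these two kinds. Hence comparability up to real translations forces equal supports and
rules out `⊤`. Conversely, when supports agree, the finitely many real differences `y i - x i` are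
bounded, and any lower and upper bounds serve as translation constants: at indices
outside the support both entries are `⊥` and there is nothing to check.

For the distance to the vector `⊥`: a real entry `x i` forces every `l` with `x i + l ≤ ⊥` to be
`⊥`, so `x\⊥ = ⊥`, which absorbs the other residual in the sum. If `x = ⊥`, every `l` is admissible,
both residuals are `⊤`, and the distance is `-(⊤ + ⊤) = ⊥`.
-/

/-- Vector residuation `x\y` over `EReal`. -/
noncomputable def vres {n : ℕ} (x y : Fin n → EReal) : EReal :=
  sSup {l : EReal | ∀ i, x i + l ≤ y i}

/-- Hilbert's projective distance `d(x,y) = -((x\y) + (y\x))`. -/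
noncomputable def dH {n : ℕ} (x y : Fin n → EReal) : EReal := -(vres x y + vres y x)

/-- Support: indices with real (finite) entry. -/
def Supp {n : ℕ} (x : Fin n → EReal) : Set (Fin n) := {i | ∃ r : ℝ, x i = (r : EReal)}

/-- The part `[[x]]` of `x`. -/
def part {n : ℕ} (x : Fin n → EReal) : Set (Fin n → EReal) :=
  {y | ∃ l m : ℝ, (∀ i, x i + (l : EReal) ≤ y i) ∧ (∀ i, y i ≤ x i + (m : EReal))}

theorem mem_Supp_iff {n : ℕ} {x : Fin n → EReal} {i : Fin n} (h : x i ≠ ⊤) :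
    i ∈ Supp x ↔ x i ≠ ⊥ := by
  constructor
  · rintro ⟨r, hr⟩
    rw [hr]
    exact EReal.coe_ne_bot r
  · intro hb
    exact ⟨(x i).toReal, (EReal.coe_toReal h hb).symm⟩

theorem vres_bot_left {n : ℕ} (y : Fin n → EReal) : vres (fun _ => ⊥) y = ⊤ := by
  simp [vres]

theorem vres_bot_right {n : ℕ} {x : Fin n → EReal} (hne : x ≠ fun _ => ⊥) :
    vres x (fun _ => ⊥) = ⊥ := by
  obtain ⟨i, hi⟩ := Function.ne_iff.mp hne
  refine sSup_eq_bot.mpr fun l hl => ?_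
  exact (EReal.add_eq_bot_iff.mp (le_bot_iff.mp (hl i))).resolve_left hi

theorem part_eq {n : ℕ} {x : Fin n → EReal} (hx : ∀ i, x i ≠ ⊤) :
    part x = {y : Fin n → EReal | (∀ i, y i ≠ ⊤) ∧ Supp y = Supp x} := by
  ext y
  constructor
  · rintro ⟨l, m, hl, hm⟩
    have hy : ∀ i, y i ≠ ⊤ := fun i =>
      ((hm i).trans_lt (EReal.add_lt_top (hx i) (EReal.coe_ne_top m))).ne
    refine ⟨hy, Set.ext fun i => ?_⟩
    rw [mem_Supp_iff (hy i), mem_Supp_iff (hx i), not_iff_not]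
    constructor
    · intro h
      have h1 := hl i
      rw [h, le_bot_iff, EReal.add_eq_bot_iff] at h1
      exact h1.resolve_right (EReal.coe_ne_bot l)
    · intro h
      have h1 := hm i
      rwa [h, EReal.bot_add, le_bot_iff] at h1
  · rintro ⟨hy, hs⟩
    let δ : Fin n → ℝ := fun i => (y i).toReal - (x i).toReal
    obtain ⟨l, hl⟩ := (Set.finite_range δ).bddBelow
    obtain ⟨m, hm⟩ := (Set.finite_range δ).bddAbove
    have key : ∀ i, x i + (l : EReal) ≤ y i ∧ y i ≤ x i + (m : EReal) := by
      intro i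
      have hi : i ∈ Supp y ↔ i ∈ Supp x := by rw [hs]
      by_cases hxi : i ∈ Supp x
      · obtain ⟨r, hr⟩ := hxi
        obtain ⟨s, hsi⟩ := hi.mpr ⟨r, hr⟩
        have h1 : l ≤ δ i := hl ⟨i, rfl⟩
        have h2 : δ i ≤ m := hm ⟨i, rfl⟩
        simp only [δ, hr, hsi, EReal.toReal_coe] at h1 h2
        rw [hr, hsi]
        constructor
        · exact_mod_cast (by linarith : r + l ≤ s)
        · exact_mod_cast (by linarith : s ≤ r + m)
      · have hyi : i ∉ Supp y := fun h => hxi (hi.mp h)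
        rw [mem_Supp_iff (hx i), not_not] at hxi
        rw [mem_Supp_iff (hy i), not_not] at hyi
        simp [hxi, hyi]
    exact ⟨l, m, fun i => (key i).1, fun i => (key i).2⟩

theorem part_in_Rmax (n : ℕ) (x : Fin n → EReal) (hx : ∀ i, x i ≠ ⊤) :
    part x = {y : Fin n → EReal | (∀ i, y i ≠ ⊤) ∧ Supp y = Supp x} ∧
    (x ≠ (fun _ => (⊥ : EReal)) → dH x (fun _ => (⊥ : EReal)) = ⊤) ∧
    (x = (fun _ => (⊥ : EReal)) → dH x (fun _ => (⊥ : EReal)) = ⊥) := by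
  refine ⟨part_eq hx, fun hne => ?_, ?_⟩
  · rw [dH, vres_bot_right hne, EReal.bot_add, EReal.neg_bot]
  · rintro rfl
    rw [dH, vres_bot_left, EReal.top_add_top, EReal.neg_top]
end

section
/- Let a, b : Fin n → EReal be row vectors with no +∞ entries, neither identically −∞, such that there exists i with a i < b i and there exists i with a i ≥ b i. Let H := {h : Fin n → EReal | (∀ i, h i ≠ +∞) ∧ a·h ≥ b·h}, and let a' be the truncation of a defined by a' i = a i if a i ≥ b i and a' i = −∞ otherwise. If x : Fin n → EReal has no +∞ entry and x ∉ H, then d(x, H) = (a'·x)\(b·x). -/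
/-!
Write `a'` for the truncation of `a` to the indices with `b i ≤ a i`, and put `p = a'·x`, `q = b·x`.
Since `x ∉ H`, `q` is a real number and `p ≤ a·x < q`.

*Lower bound.* A point `h` with `b·h ≤ a·h` satisfies `b·h ≤ a'·h`: an index where `a·h` is
attained at a finite value cannot have `a i < b i`. Put `s = x\h` and `t = h\x`. As none of the
vectors has a `⊤` entry, these suprema are attained, so `x + s ≤ h` and `h + t ≤ x`, whence
`q + s ≤ b·h ≤ a'·h` and `a'·h + t ≤ p`. Therefore `q + (s + t) ≤ p`, and every `l` with
`p + l ≤ q` satisfies `l ≤ -(s + t) = d(x, h)`.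

*Upper bound.* If `p = ⊥` the residual `p\q` is `⊤`. Otherwise raise `x` by `q - p` on the indices
with `b i ≤ a i` and leave it unchanged elsewhere: the new point lies in `H` and is at distance at
most `q - p` from `x`.
-/

/-- Max-plus pairing of a row vector with a column vector: `a·h = ⨆ i, a i + h i`. -/
noncomputable def dotE {n : ℕ} (a h : Fin n → EReal) : EReal := ⨆ i, (a i + h i)

/-- Scalar residuation `μ\ν`. -/
noncomputable def sres (μ ν : EReal) : EReal := sSup {l : EReal | μ + l ≤ ν}

/-- Distance from a point to a set. -/
noncomputable def dSet {n : ℕ} (x : Fin n → EReal) (V : Set (Fin n → EReal)) : EReal :=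
  ⨅ v ∈ V, dH x v

lemma dotE_attained {n : ℕ} [Nonempty (Fin n)] (c y : Fin n → EReal) :
    ∃ i, c i + y i = dotE c y :=
  exists_eq_ciSup_of_finite (f := fun i => c i + y i)

lemma le_dotE {n : ℕ} (c y : Fin n → EReal) (i : Fin n) : c i + y i ≤ dotE c y :=
  le_iSup (fun i => c i + y i) i

lemma dotE_add_le {n : ℕ} [Nonempty (Fin n)] (c y z : Fin n → EReal) (l : EReal)
    (h : ∀ i, y i + l ≤ z i) : dotE c y + l ≤ dotE c z := by
  obtain ⟨i, hi⟩ := dotE_attained c y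
  rw [← hi, add_assoc]
  exact (add_le_add le_rfl (h i)).trans (le_dotE c z i)

lemma dotE_ne_top {n : ℕ} [Nonempty (Fin n)] (c y : Fin n → EReal)
    (hc : ∀ i, c i ≠ ⊤) (hy : ∀ i, y i ≠ ⊤) : dotE c y ≠ ⊤ := by
  obtain ⟨i, hi⟩ := dotE_attained c y
  rw [← hi]
  exact EReal.add_ne_top (hc i) (hy i)

/-- The supremum defining the residuation is attained: for `y i ≠ ⊤` the condition `y i + l ≤ z i`
is either vacuous or equivalent to `l ≤ z i - y i`. -/
lemma add_vres_le {n : ℕ} (y z : Fin n → EReal) (hy : ∀ i, y i ≠ ⊤) (i : Fin n) :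
    y i + vres y z ≤ z i := by
  have hyi := hy i
  by_cases hb : y i = ⊥
  · simp [hb]
  have h : vres y z ≤ z i - y i := by
    refine sSup_le fun l hl => ?_
    rw [EReal.le_sub_iff_add_le (.inl hb) (.inl hyi), add_comm]
    exact hl i
  rw [EReal.le_sub_iff_add_le (.inl hb) (.inl hyi), add_comm] at h
  exact h

/-- On the half-space `b·h ≤ a·h`, only the coefficients of `a` that dominate those of `b`
matter. -/
lemma dotE_le_trunc {n : ℕ} [Nonempty (Fin n)] (a b h : Fin n → EReal)
    (hh : ∀ i, h i ≠ ⊤) (H : dotE b h ≤ dotE a h) :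
    dotE b h ≤ dotE (fun i => if b i ≤ a i then a i else ⊥) h := by
  obtain ⟨i, hi⟩ := dotE_attained a h
  by_cases hab : b i ≤ a i
  · refine H.trans ?_
    rw [← hi]
    simpa [hab] using le_dotE (fun i => if b i ≤ a i then a i else ⊥) h i
  · by_cases hb : h i = ⊥
    · rw [← hi, hb, EReal.add_bot] at H
      exact H.trans bot_le
    · exfalso
      have h1 : a i + h i < b i + h i := by
        have h2 := hh i
        lift h i to ℝ using ⟨h2, hb⟩ with r
        exact EReal.add_lt_add_right_coe (not_le.1 hab) r
      exact absurd ((le_dotE b h i).trans (H.trans hi.ge)) (not_le.2 h1)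

theorem dist_to_general_halfspace (n : ℕ) (a b : Fin n → EReal)
    (ha : ∀ i, a i ≠ ⊤) (hb : ∀ i, b i ≠ ⊤)
    (hane : a ≠ fun _ => (⊥ : EReal)) (hbne : b ≠ fun _ => (⊥ : EReal))
    (hlt : ∃ i, a i < b i) (hge : ∃ i, b i ≤ a i)
    (x : Fin n → EReal) (hx : ∀ i, x i ≠ ⊤)
    (hxH : x ∉ {h : Fin n → EReal | (∀ i, h i ≠ ⊤) ∧ dotE b h ≤ dotE a h}) :
    dSet x {h : Fin n → EReal | (∀ i, h i ≠ ⊤) ∧ dotE b h ≤ dotE a h} =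
      sres (dotE (fun i => if b i ≤ a i then a i else ⊥) x) (dotE b x) := by
  obtain ⟨i₀, -⟩ := hlt
  have : Nonempty (Fin n) := ⟨i₀⟩
  have hab : dotE a x < dotE b x := not_le.1 fun h => hxH ⟨hx, h⟩
  have hq_bot : dotE b x ≠ ⊥ := (bot_le.trans_lt hab).ne'
  have hq_top : dotE b x ≠ ⊤ := dotE_ne_top b x hb hx
  have hle : ∀ i, (if b i ≤ a i then a i else ⊥) ≤ a i := fun i => by
    split_ifs
    exacts [le_rfl, bot_le]
  have hpa : dotE (fun i => if b i ≤ a i then a i else ⊥) x ≤ dotE a x :=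
    iSup_mono fun i => add_le_add (hle i) le_rfl
  have hp_top : dotE (fun i => if b i ≤ a i then a i else ⊥) x ≠ ⊤ :=
    (hpa.trans_lt (hab.trans_le le_top)).ne
  apply le_antisymm
  · by_cases hp_bot : dotE (fun i => if b i ≤ a i then a i else ⊥) x = ⊥
    · have : sres (dotE (fun i => if b i ≤ a i then a i else ⊥) x) (dotE b x) = ⊤ := by
        rw [hp_bot]
        exact top_le_iff.1 (le_sSup (by simp))
      rw [this]
      exact le_top
    obtain ⟨p, hp⟩ : ∃ p : ℝ, (p : EReal) = dotE (fun i => if b i ≤ a i then a i else ⊥) x :=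
      ⟨_, EReal.coe_toReal hp_top hp_bot⟩
    obtain ⟨q, hq⟩ : ∃ q : ℝ, (q : EReal) = dotE b x := ⟨_, EReal.coe_toReal hq_top hq_bot⟩
    have hpq : p < q := by
      rw [← EReal.coe_lt_coe_iff, hp, hq]
      exact hpa.trans_lt hab
    have hsum : (p : EReal) + ((q - p : ℝ) : EReal) = q := by
      rw [← EReal.coe_add]
      congr 1
      ring
    have hge' : ((q - p : ℝ) : EReal) ≤
        sres (dotE (fun i => if b i ≤ a i then a i else ⊥) x) (dotE b x) := by
      rw [← hp, ← hq]
      exact le_sSup hsum.le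
    refine le_trans ?_ hge'
    have ht : (0 : EReal) ≤ ((q - p : ℝ) : EReal) := EReal.coe_nonneg.2 (sub_nonneg.2 hpq.le)
    -- The nearest point: `x` raised by `q - p` where `a` dominates `b`.
    let h : Fin n → EReal := fun i => x i + if b i ≤ a i then ((q - p : ℝ) : EReal) else 0
    have h_top : ∀ i, h i ≠ ⊤ := fun i => by
      refine EReal.add_ne_top (hx i) ?_
      split_ifs
      exacts [EReal.coe_ne_top _, EReal.zero_ne_top]
    have hqa : (q : EReal) ≤ dotE a h := by
      obtain ⟨i, hi⟩ := dotE_attained (fun i => if b i ≤ a i then a i else ⊥) x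
      rw [← hp] at hi
      by_cases hc : b i ≤ a i
      · simp only [hc, if_true] at hi
        rw [← hsum, ← hi, add_assoc]
        simpa [h, hc] using le_dotE a h i
      · simp [hc] at hi
    have hbq : dotE b h ≤ q := by
      refine iSup_le fun i => ?_
      by_cases hc : b i ≤ a i
      · have h1 := le_dotE (fun i => if b i ≤ a i then a i else ⊥) x i
        simp only [hc, if_true] at h1
        rw [← hp] at h1
        simp only [h, hc, if_true]
        rw [← add_assoc, ← hsum]
        exact add_le_add ((add_le_add hc le_rfl).trans h1) le_rfl
      · simp only [h, hc, if_false, add_zero]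
        rw [hq]
        exact le_dotE b x i
    have hd : dH x h ≤ ((q - p : ℝ) : EReal) := by
      have h1 : (0 : EReal) ≤ vres x h := by
        refine le_sSup fun i => add_le_add le_rfl ?_
        split_ifs
        exacts [ht, le_rfl]
      have h2 : ((-(q - p) : ℝ) : EReal) ≤ vres h x := by
        refine le_sSup fun i => ?_
        have : (if b i ≤ a i then ((q - p : ℝ) : EReal) else 0) + ((-(q - p) : ℝ) : EReal) ≤ 0 := by
          split_ifs
          · rw [← EReal.coe_add, add_neg_cancel, EReal.coe_zero]
          · rw [zero_add]
            exact EReal.coe_nonpos.2 (by linarith)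
        calc h i + ((-(q - p) : ℝ) : EReal) ≤ x i + 0 := by
              simp only [h]
              rw [add_assoc]
              exact add_le_add le_rfl this
          _ = x i := add_zero _
      have h3 := add_le_add h1 h2
      rw [zero_add, EReal.coe_neg] at h3
      exact EReal.neg_le.1 h3
    exact (iInf₂_le h ⟨h_top, hbq.trans hqa⟩).trans hd
  · refine le_iInf₂ fun h hh => sSup_le fun l hl => ?_
    obtain ⟨h_top, hH⟩ := hh
    have h1 := dotE_add_le b x h _ (add_vres_le x h hx)
    have h2 := dotE_add_le (fun i => if b i ≤ a i then a i else ⊥) h x _ (add_vres_le h x h_top)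
    have h3 : dotE b x + (vres x h + vres h x) ≤
        dotE (fun i => if b i ≤ a i then a i else ⊥) x := by
      rw [← add_assoc]
      exact (add_le_add (h1.trans (dotE_le_trunc a b h h_top hH)) le_rfl).trans h2
    have h4 : dotE b x + (vres x h + vres h x) + l ≤ dotE b x :=
      (add_le_add h3 le_rfl).trans hl
    unfold dH
    generalize vres x h + vres h x = s at *
    -- `s + l ≤ 0` after cancelling the real number `b·x`; hence `l ≤ -s`.
    lift dotE b x to ℝ using ⟨hq_top, hq_bot⟩ with q
    induction s with
    | bot => simp
    | top =>
      rw [EReal.coe_add_top] at h3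
      exact absurd (top_le_iff.1 h3) hp_top
    | coe s =>
      induction l with
      | bot => exact bot_le
      | top =>
        rw [← EReal.coe_add, EReal.coe_add_top] at h4
        exact absurd (top_le_iff.1 h4) (EReal.coe_ne_top q)
      | coe l =>
        norm_cast at h4 ⊢
        linarith
end

section
/- Let A, B : Fin p → Fin n → EReal be matrices with no +∞ entries such that for each row j, Supp (A j) ∩ Supp (B j) = ∅ and Supp (B j) ≠ ∅. Let V := {v : Fin n → EReal | (∀ i, v i ≠ +∞) ∧ ∀ j, (A j)·v ≥ (B j)·v}, and let u : Fin n → ℝ (regarded as a vector in Fin n → EReal). Define the cyclic projection sequence ξ : ℕ → (Fin n → EReal) by ξ 0 = u and ξ (k+1) = ξ k ⊓ ((B j(k))\((A j(k))·(ξ k))) pointwise, where j(k) ∈ Fin p is the index congruent to k+1 modulo p; define the power sequence η : ℕ → (Fin n → EReal) by η 0 = u and η (k+1) = (B^# ((A·)(η k))) ⊓ η k pointwise, where (A·)(v) j := (A j)·v and (B^# y) i := ⨅ j, ((−(B j i)) +' (y j)) with +' the upper addition. Then for all k ∈ ℕ, sSup {v ∈ V | v ≤ u} ≤ ξ (p·k)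 ≤ η k. -/
/-- Support of a row vector: indices with entry `≠ -∞`. -/
def rSupp {n : ℕ} (a : Fin n → EReal) : Set (Fin n) := {i | a i ≠ ⊥}

/-- Upper (dual) addition on `EReal`. -/
noncomputable def uadd (a b : EReal) : EReal := -((-a) + (-b))

theorem dotE_mono {n : ℕ} (a : Fin n → EReal) {v w : Fin n → EReal} (h : v ≤ w) :
    dotE a v ≤ dotE a w :=
  iSup_mono fun i => add_le_add le_rfl (h i)

/-- The scalar residual `b\c` is bounded by the upper sum of `-b` and `c`, so one entry of the cyclic
projection step is bounded by the corresponding term of the power step. -/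
theorem sSup_residual_le_uadd {b c : EReal} (hb : b ≠ ⊤) :
    sSup {t : EReal | b + t ≤ c} ≤ uadd (-b) c := by
  refine sSup_le fun t ht => ?_
  simp only [Set.mem_ofPred_eq] at ht
  unfold uadd
  rw [neg_neg, EReal.le_neg]
  induction b with
  | bot => simp
  | top => exact absurd rfl hb
  | coe b =>
    induction c with
    | top => simp
    | bot =>
      have : t = ⊥ := by
        rcases EReal.add_eq_bot_iff.1 (le_bot_iff.1 ht) with h | h
        · exact absurd h (EReal.coe_ne_bot b)
        · exact h
      simp [this]
    | coe c =>
      induction t with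
      | bot => simp
      | top => simp at ht
      | coe t =>
        norm_cast at ht ⊢
        linarith

theorem sandwich_cyclic_power (p n : ℕ) (hp : 0 < p)
    (A B : Fin p → Fin n → EReal)
    (hA : ∀ j i, A j i ≠ ⊤) (hB : ∀ j i, B j i ≠ ⊤)
    (hdisj : ∀ j, rSupp (A j) ∩ rSupp (B j) = ∅)
    (hBne : ∀ j, rSupp (B j) ≠ ∅)
    (u : Fin n → ℝ)
    (ξ η : ℕ → Fin n → EReal)
    (hξ0 : ξ 0 = fun i => ((u i : ℝ) : EReal))
    (hξ : ∀ k, ξ (k + 1) = fun i =>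
      min (ξ k i)
        (sSup {t : EReal | B ⟨k % p, Nat.mod_lt k hp⟩ i + t ≤
          dotE (A ⟨k % p, Nat.mod_lt k hp⟩) (ξ k)}))
    (hη0 : η 0 = fun i => ((u i : ℝ) : EReal))
    (hη : ∀ k, η (k + 1) = fun i =>
      min (⨅ j, uadd (-(B j i)) (dotE (A j) (η k))) (η k i)) :
    ∀ k : ℕ,
      sSup {v ∈ {v : Fin n → EReal | (∀ i, v i ≠ ⊤) ∧ ∀ j, dotE (B j) v ≤ dotE (A j) v} |
          v ≤ fun i => ((u i : ℝ) : EReal)} ≤ ξ (p * k) ∧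
      ξ (p * k) ≤ η k := by
  have hstep : ∀ k, ξ (k + 1) ≤ ξ k := fun k i => by
    rw [hξ k]
    exact min_le_left _ _
  have hanti : Antitone ξ := antitone_nat_of_succ_le hstep
  have hlow : ∀ v : Fin n → EReal, (∀ j, dotE (B j) v ≤ dotE (A j) v) →
      (v ≤ fun i => ((u i : ℝ) : EReal)) → ∀ k, v ≤ ξ k := by
    intro v hv hvu k
    induction k with
    | zero => rwa [hξ0]
    | succ k ih =>
      intro i
      rw [hξ k]
      refine le_min (ih i) (le_sSup ?_)
      exact (le_iSup (fun i => B ⟨k % p, Nat.mod_lt k hp⟩ i + v i) i).trans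
        ((hv _).trans (dotE_mono _ ih))
  have hup : ∀ k, ξ (p * k) ≤ η k := by
    intro k
    induction k with
    | zero => rw [Nat.mul_zero, hξ0, hη0]
    | succ k ih =>
      intro i
      rw [hη k]
      refine le_min (le_iInf fun j => ?_) ((hanti (Nat.mul_le_mul_left p k.le_succ) i).trans (ih i))
      -- Step `p * k + j` of the cyclic sequence uses row `j`.
      have hj : (⟨(p * k + j) % p, Nat.mod_lt _ hp⟩ : Fin p) = j :=
        Fin.ext (by simp [Nat.mod_eq_of_lt j.2])
      have hle : p * k + j + 1 ≤ p * (k + 1) := by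
        have := j.2
        rw [Nat.mul_succ]
        omega
      have h1 : ξ (p * k + j + 1) i ≤
          sSup {t : EReal | B j i + t ≤ dotE (A j) (ξ (p * k + j))} := by
        rw [hξ (p * k + j), hj]
        exact min_le_right _ _
      have h2 : dotE (A j) (ξ (p * k + j)) ≤ dotE (A j) (η k) :=
        dotE_mono _ ((hanti (Nat.le_add_right _ _)).trans ih)
      exact (hanti hle i).trans (h1.trans ((sSup_le_sSup fun t ht => le_trans ht h2).trans
        (sSup_residual_le_uadd (hB j i))))
  exact fun k => ⟨sSup_le fun v hv => hlow v hv.1.2 hv.2 _, hup k⟩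
end
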